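/- arXiv:1912.04815 — 8 statements merged into one kernel-verified Lean document; each statement's English description precedes it below -/
import Mathlib

section
/- Let n ≥ 1, let P be an n×n nonnegative row sub-stochastic matrix, let w ∈ ℝ^n with w ≥ 0, and let c ∈ ℝ^n. Then the equilibrium set X(c) = {x ∈ ℝ^n : x = S_0^w(Pᵀx + c)} is nonempty, is contained in the lattice {y ∈ ℝ^n : 0 ≤ y ≤ w}, and admits a minimal element x̲ and a maximal element x̄ with respect to the entrywise partial order (i.e., x̲, x̄ ∈ X(c) and x̲ ≤ x ≤ x̄ for every x ∈ X(c)). -/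
open Matrix Finset Filter Topology

/-- The saturation function `S_0^w`. -/
def sat {n : ℕ} (w y : Fin n → ℝ) : Fin n → ℝ := fun i => min (max (y i) 0) (w i)

/-- `x` is an equilibrium of the network `(P, w)` with exogenous flow `c`. -/
def IsEquil {n : ℕ} (P : Matrix (Fin n) (Fin n) ℝ) (w c x : Fin n → ℝ) : Prop :=
  x = sat w (Pᵀ.mulVec x + c)

/-- **Knaster–Tarski** on an order interval of a conditionally complete lattice. -/
theorem Monotone.exists_isLeast_fixedPoints {α : Type*} [ConditionallyCompleteLattice α]
    {f : α → α} (hf : Monotone f) {a b : α} (hfa : ∀ x, a ≤ f x) (hfb : ∀ x, f x ≤ b) :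
    ∃ x, IsLeast (Function.fixedPoints f) x := by
  set s : Set α := {x | a ≤ x ∧ f x ≤ x}
  have hbdd : BddBelow s := ⟨a, fun x hx => hx.1⟩
  have hne : s.Nonempty := ⟨b, (hfa b).trans (hfb b), hfb b⟩
  have hle : f (sInf s) ≤ sInf s :=
    le_csInf hne fun x hx => (hf (csInf_le hbdd hx)).trans hx.2
  have hge : sInf s ≤ f (sInf s) := csInf_le hbdd ⟨hfa _, hf hle⟩
  exact ⟨sInf s, le_antisymm hle hge, fun x hx =>
    csInf_le hbdd ⟨(hfa x).trans_eq hx, le_of_eq hx⟩⟩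

theorem Monotone.exists_isGreatest_fixedPoints {α : Type*} [ConditionallyCompleteLattice α]
    {f : α → α} (hf : Monotone f) {a b : α} (hfa : ∀ x, a ≤ f x) (hfb : ∀ x, f x ≤ b) :
    ∃ x, IsGreatest (Function.fixedPoints f) x :=
  Monotone.exists_isLeast_fixedPoints (α := αᵒᵈ) hf.dual hfb hfa

theorem sat_nonneg {n : ℕ} {w : Fin n → ℝ} (hw : 0 ≤ w) (y : Fin n → ℝ) : 0 ≤ sat w y :=
  fun i => le_min (le_max_right _ _) (hw i)

theorem sat_le {n : ℕ} (w y : Fin n → ℝ) : sat w y ≤ w :=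
  fun _ => min_le_right _ _

theorem sat_mono {n : ℕ} (w : Fin n → ℝ) : Monotone (sat w) :=
  fun _ _ h i => min_le_min_right _ (max_le_max_right _ (h i))

theorem monotone_sat_transpose_mulVec_add {n : ℕ} {P : Matrix (Fin n) (Fin n) ℝ}
    (hP : ∀ i j, 0 ≤ P i j) (w c : Fin n → ℝ) :
    Monotone fun x => sat w (Pᵀ.mulVec x + c) := by
  intro x y h
  have hmul : Pᵀ.mulVec x ≤ Pᵀ.mulVec y := fun i =>
    dotProduct_le_dotProduct_of_nonneg_left h fun j => hP j i
  exact sat_mono w (add_le_add_left hmul c)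

/-- for a nonnegative row sub-stochastic `P` and `w ≥ 0`, the equilibrium set is
nonempty, contained in `{y : 0 ≤ y ≤ w}`, and has a minimal and a maximal element. -/
theorem equilibria_nonempty_min_max
    {n : ℕ} (hn : 1 ≤ n) (P : Matrix (Fin n) (Fin n) ℝ)
    (hP : ∀ i j, 0 ≤ P i j) (hsub : ∀ i, ∑ j, P i j ≤ 1)
    (w : Fin n → ℝ) (hw : 0 ≤ w) (c : Fin n → ℝ) :
    (∃ x, IsEquil P w c x) ∧
    (∀ x, IsEquil P w c x → 0 ≤ x ∧ x ≤ w) ∧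
    (∃ xlo, IsEquil P w c xlo ∧ ∀ x, IsEquil P w c x → xlo ≤ x) ∧
    (∃ xhi, IsEquil P w c xhi ∧ ∀ x, IsEquil P w c x → x ≤ xhi) := by
  have hmono := monotone_sat_transpose_mulVec_add hP w c
  obtain ⟨xlo, hlo, hlo_le⟩ :=
    hmono.exists_isLeast_fixedPoints (fun _ => sat_nonneg hw _) (fun _ => sat_le w _)
  obtain ⟨xhi, hhi, hle_hi⟩ :=
    hmono.exists_isGreatest_fixedPoints (fun _ => sat_nonneg hw _) (fun _ => sat_le w _)
  refine ⟨⟨xlo, hlo.symm⟩, fun x hx => ?_, ⟨xlo, hlo.symm, fun x hx => hlo_le hx.symm⟩,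
    ⟨xhi, hhi.symm, fun x hx => hle_hi hx.symm⟩⟩
  rw [hx]
  exact ⟨sat_nonneg hw _, sat_le w _⟩
end

section
/- Let n ≥ 1, let P be an n×n nonnegative row sub-stochastic matrix, let w ∈ ℝ^n with w ≥ 0, and let c ∈ ℝ^n. Define the sequence x(0) = w and x(t+1) = S_0^w(Pᵀx(t) + c) for t ≥ 0. Then the sequence x(t) is entrywise nonincreasing and converges, as t → ∞, to the maximal equilibrium x̄ of the network (P, w) with exogenous flow c (i.e., its limit x̄ satisfies x̄ = S_0^w(Pᵀx̄ + c) and x ≤ x̄ for every x with x = S_0^w(Pᵀx + c)). -/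
open Matrix Finset Filter Topology

theorem continuous_sat {n : ℕ} (w : Fin n → ℝ) : Continuous (sat w) := by
  unfold sat
  fun_prop

theorem monotone_sat_mulVec_add {n : ℕ} {P : Matrix (Fin n) (Fin n) ℝ} (hP : ∀ i j, 0 ≤ P i j)
    (w c : Fin n → ℝ) : Monotone fun y => sat w (Pᵀ.mulVec y + c) := by
  intro y z h
  refine sat_mono w (add_le_add_left (fun i => ?_) c)
  simp only [mulVec, dotProduct, transpose_apply]
  exact Finset.sum_le_sum fun j _ => mul_le_mul_of_nonneg_left (h j) (hP j i)

theorem continuous_sat_mulVec_add {n : ℕ} (P : Matrix (Fin n) (Fin n) ℝ) (w c : Fin n → ℝ) :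
    Continuous fun y => sat w (Pᵀ.mulVec y + c) :=
  (continuous_sat w).comp
    ((Continuous.matrix_mulVec continuous_const continuous_id).add continuous_const)

/-- the iteration started at `w` is entrywise nonincreasing and converges to
the maximal equilibrium. -/
theorem iteration_from_w_converges_to_maximal
    {n : ℕ} (hn : 1 ≤ n) (P : Matrix (Fin n) (Fin n) ℝ)
    (hP : ∀ i j, 0 ≤ P i j) (hsub : ∀ i, ∑ j, P i j ≤ 1)
    (w : Fin n → ℝ) (hw : 0 ≤ w) (c : Fin n → ℝ)
    (x : ℕ → Fin n → ℝ) (hx0 : x 0 = w)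
    (hxs : ∀ t, x (t + 1) = sat w (Pᵀ.mulVec (x t) + c)) :
    Antitone x ∧
    ∃ xhi : Fin n → ℝ, Tendsto x atTop (𝓝 xhi) ∧ IsEquil P w c xhi ∧
      ∀ y, IsEquil P w c y → y ≤ xhi := by
  have hmono := monotone_sat_mulVec_add hP w c
  have hanti : Antitone x := by
    refine antitone_nat_of_succ_le fun t => ?_
    induction t with
    | zero => rw [hxs, hx0]; exact sat_le _ _
    | succ t ih =>
      rw [hxs (t + 1)]
      nth_rewrite 2 [hxs t]
      exact hmono ih
  have hnonneg : ∀ t, 0 ≤ x t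
    | 0 => hx0 ▸ hw
    | t + 1 => hxs t ▸ sat_nonneg hw _
  have hlim : Tendsto x atTop (𝓝 fun i => ⨅ t, x t i) :=
    tendsto_pi_nhds.2 fun i => tendsto_atTop_ciInf (fun _ _ h => hanti h i)
      ⟨0, Set.forall_mem_range.2 fun t => hnonneg t i⟩
  refine ⟨hanti, _, hlim, ?_, fun y hy => ge_of_tendsto' hlim fun t => ?_⟩
  · refine tendsto_nhds_unique ((tendsto_add_atTop_iff_nat 1).2 hlim) ?_
    simp only [hxs]
    exact ((continuous_sat_mulVec_add P w c).tendsto _).comp hlim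
  · induction t with
    | zero => rw [hx0, hy]; exact sat_le _ _
    | succ t ih => rw [hxs, hy]; exact hmono ih
end

section
/- Let n ≥ 1, let P be an n×n nonnegative row sub-stochastic matrix, let w ∈ ℝ^n with w ≥ 0, and let c ∈ ℝ^n. For an equilibrium x, define the partition of the index set {1,…,n} into the surplus set V_+^x = {i : c_i + (Pᵀx)_i > w_i}, the exposed set V_0^x = {i : 0 ≤ c_i + (Pᵀx)_i ≤ w_i}, and the deficit set V_-^x = {i : c_i + (Pᵀx)_i < 0}. Then this partition is the same for all equilibria: for any two equilibria x and y of the network (P, w) with exogenous flow c, V_+^x = V_+^y, V_0^x = V_0^y, and V_-^x = V_-^y. -/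
open Matrix Finset Filter Topology

/-- Clamping to an interval `[0, w]` does not increase distances. -/
lemma abs_min_max_sub_min_max_le (a b w : ℝ) :
    |min (max a 0) w - min (max b 0) w| ≤ |a - b| :=
  (abs_inf_sub_inf_le_abs _ _ _).trans (abs_sup_sub_sup_le_abs _ _ _)

/-- The transpose of a nonnegative row sub-stochastic matrix is a contraction in the `ℓ¹` norm. -/
lemma sum_abs_transpose_mulVec_le {ι : Type*} [Fintype ι] (P : Matrix ι ι ℝ)
    (hP : ∀ i j, 0 ≤ P i j) (hsub : ∀ i, ∑ j, P i j ≤ 1) (d : ι → ℝ) :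
    ∑ i, |(Pᵀ *ᵥ d) i| ≤ ∑ i, |d i| :=
  calc ∑ i, |(Pᵀ *ᵥ d) i| ≤ ∑ i, ∑ k, P k i * |d k| := by
        refine Finset.sum_le_sum fun i _ => (Finset.abs_sum_le_sum_abs _ _).trans_eq ?_
        simp [abs_mul, abs_of_nonneg (hP _ _)]
    _ = ∑ k, (∑ i, P k i) * |d k| := by
        rw [Finset.sum_comm]
        simp only [Finset.sum_mul]
    _ ≤ ∑ k, |d k| :=
        Finset.sum_le_sum fun k _ => mul_le_of_le_one_left (abs_nonneg _) (hsub k)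

/-- Two equilibria differ by exactly as much as their unsaturated inflows, node by node. -/
lemma IsEquil.abs_sub_eq {n : ℕ} {P : Matrix (Fin n) (Fin n) ℝ}
    (hP : ∀ i j, 0 ≤ P i j) (hsub : ∀ i, ∑ j, P i j ≤ 1) {w c x y : Fin n → ℝ}
    (hx : IsEquil P w c x) (hy : IsEquil P w c y) (i : Fin n) :
    |x i - y i| = |(Pᵀ *ᵥ x) i - (Pᵀ *ᵥ y) i| := by
  have hle : ∀ j ∈ Finset.univ, |x j - y j| ≤ |(Pᵀ *ᵥ x) j - (Pᵀ *ᵥ y) j| := by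
    intro j _
    have h := abs_min_max_sub_min_max_le ((Pᵀ *ᵥ x + c) j) ((Pᵀ *ᵥ y + c) j) (w j)
    rw [show min (max ((Pᵀ *ᵥ x + c) j) 0) (w j) = x j from (congrFun hx j).symm,
      show min (max ((Pᵀ *ᵥ y + c) j) 0) (w j) = y j from (congrFun hy j).symm] at h
    simpa using h
  have hsum := sum_abs_transpose_mulVec_le P hP hsub (x - y)
  simp only [Matrix.mulVec_sub, Pi.sub_apply] at hsum
  exact (Finset.sum_eq_sum_iff_of_le hle).1 (le_antisymm (Finset.sum_le_sum hle) hsum) i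
    (Finset.mem_univ i)

/-- If clamping to `[0, w]` preserves the distance of `a` and `b`, then `b` exceeds `w`
whenever `a` does. -/
lemma lt_of_abs_min_max_sub_eq {a b w : ℝ}
    (h : |min (max a 0) w - min (max b 0) w| = |a - b|) (ha : w < a) : w < b := by
  by_contra! hb
  have hba : b ≤ min (max b 0) w := le_min (le_max_left _ _) hb
  have hbw : min (max b 0) w ≤ w := min_le_right _ _
  rw [min_eq_right (ha.le.trans (le_max_left a 0)), abs_of_nonneg (by linarith),
    abs_of_nonneg (by linarith)] at h
  linarith

/-- If clamping to `[0, w]` preserves the distance of `a` and `b`, then `b` is negative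
whenever `a` is. -/
lemma neg_of_abs_min_max_sub_eq {a b w : ℝ} (hw : 0 ≤ w)
    (h : |min (max a 0) w - min (max b 0) w| = |a - b|) (ha : a < 0) : b < 0 := by
  by_contra! hb
  rw [max_eq_right ha.le, min_eq_left hw, max_eq_left hb, zero_sub, abs_neg,
    abs_of_nonneg (le_min hb hw), abs_sub_comm, abs_of_nonneg (by linarith)] at h
  linarith [min_le_left b w]

/-- the partition of the nodes into surplus / exposed / deficit nodes is the
same for all equilibria. -/
theorem partition_invariant_over_equilibria
    {n : ℕ} (hn : 1 ≤ n) (P : Matrix (Fin n) (Fin n) ℝ)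
    (hP : ∀ i j, 0 ≤ P i j) (hsub : ∀ i, ∑ j, P i j ≤ 1)
    (w : Fin n → ℝ) (hw : 0 ≤ w) (c : Fin n → ℝ)
    (x y : Fin n → ℝ) (hx : IsEquil P w c x) (hy : IsEquil P w c y) :
    ∀ i,
      (w i < c i + Pᵀ.mulVec x i ↔ w i < c i + Pᵀ.mulVec y i) ∧
      ((0 ≤ c i + Pᵀ.mulVec x i ∧ c i + Pᵀ.mulVec x i ≤ w i) ↔
        (0 ≤ c i + Pᵀ.mulVec y i ∧ c i + Pᵀ.mulVec y i ≤ w i)) ∧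
      (c i + Pᵀ.mulVec x i < 0 ↔ c i + Pᵀ.mulVec y i < 0) := by
  intro i
  have h : |min (max (c i + (Pᵀ *ᵥ x) i) 0) (w i) - min (max (c i + (Pᵀ *ᵥ y) i) 0) (w i)| =
      |c i + (Pᵀ *ᵥ x) i - (c i + (Pᵀ *ᵥ y) i)| := by
    rw [add_sub_add_left_eq_sub, ← hx.abs_sub_eq hP hsub hy i, add_comm (c i), add_comm (c i)]
    exact congrArg abs (congrArg₂ _ (congrFun hx i).symm (congrFun hy i).symm)
  have hsymm := h
  rw [abs_sub_comm, abs_sub_comm (c i + (Pᵀ *ᵥ x) i)] at hsymm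
  have hsurplus : w i < c i + (Pᵀ *ᵥ x) i ↔ w i < c i + (Pᵀ *ᵥ y) i :=
    ⟨lt_of_abs_min_max_sub_eq h, lt_of_abs_min_max_sub_eq hsymm⟩
  have hdeficit : c i + (Pᵀ *ᵥ x) i < 0 ↔ c i + (Pᵀ *ᵥ y) i < 0 :=
    ⟨neg_of_abs_min_max_sub_eq (hw i) h, neg_of_abs_min_max_sub_eq (hw i) hsymm⟩
  exact ⟨hsurplus, and_congr (by simpa using hdeficit.not) (by simpa using hsurplus.not), hdeficit⟩
end

section
/- Let n ≥ 1, let P be an n×n nonnegative row sub-stochastic matrix, let w ∈ ℝ^n with w ≥ 0, and let c ∈ ℝ^n. Then there is a partition {1,…,n} = V_+ ∪ V_0 ∪ V_- (depending only on P, w, c) such that: (i) every equilibrium x of (P, w) with exogenous flow c satisfies x_i = 0 for all i ∈ V_-, x_i = w_i for all i ∈ V_+, and x_i = c_i + (Pᵀx)_i for all i ∈ V_0; and (ii) any two equilibria x, y satisfy x_i = y_i for all i ∈ V_- ∪ V_+. -/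
open Matrix Finset Filter Topology

/-- Clamping to `[0, w]` does not increase distances. -/
theorem abs_clamp_sub_clamp_le (w a b : ℝ) :
    |min (max a 0) w - min (max b 0) w| ≤ |a - b| := by
  have h₁ := abs_min_sub_min_le_max (max a 0) w (max b 0) w
  have h₂ := abs_max_sub_max_le_max a 0 b 0
  simp only [sub_self, abs_zero, abs_nonneg, sup_of_le_left] at h₁ h₂
  exact h₁.trans h₂

/-- If clamping to `[0, w]` preserves the distance of `a` and `b`, and `a` lies outside
`[0, w]`, then `a = b`. -/
theorem eq_of_abs_sub_le_abs_clamp_sub_clamp {w a b : ℝ} (hw : 0 ≤ w)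
    (h : |a - b| ≤ |min (max a 0) w - min (max b 0) w|) (ha : a < 0 ∨ w < a) : a = b := by
  grind

/-- The transpose of a nonnegative row sub-stochastic matrix is an `ℓ¹`-contraction. -/
theorem sum_abs_transpose_mulVec_le_s6 {n : ℕ} {P : Matrix (Fin n) (Fin n) ℝ}
    (hP : ∀ i j, 0 ≤ P i j) (hsub : ∀ i, ∑ j, P i j ≤ 1) (z : Fin n → ℝ) :
    ∑ i, |Pᵀ.mulVec z i| ≤ ∑ i, |z i| := by
  calc ∑ i, |Pᵀ.mulVec z i| ≤ ∑ i, ∑ k, P k i * |z k| := by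
        refine Finset.sum_le_sum fun i _ => ?_
        rw [Matrix.mulVec_eq_sum, Finset.sum_apply]
        refine (Finset.abs_sum_le_sum_abs _ _).trans_eq ?_
        refine Finset.sum_congr rfl fun k _ => ?_
        simp [abs_mul, abs_of_nonneg (hP k i)]
    _ = ∑ k, (∑ i, P k i) * |z k| := by
        rw [Finset.sum_comm]
        simp only [Finset.sum_mul]
    _ ≤ ∑ k, |z k| :=
        Finset.sum_le_sum fun k _ => mul_le_of_le_one_left (abs_nonneg _) (hsub k)

theorem IsEquil.apply {n : ℕ} {P : Matrix (Fin n) (Fin n) ℝ} {w c x : Fin n → ℝ}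
    (hx : IsEquil P w c x) (i : Fin n) :
    x i = min (max ((Pᵀ.mulVec x + c) i) 0) (w i) :=
  congrFun hx i

/-- The unsaturated inflows of two equilibria differ, at each node, by no more than the
equilibria themselves. -/
theorem IsEquil.abs_inflow_sub_le {n : ℕ} {P : Matrix (Fin n) (Fin n) ℝ}
    (hP : ∀ i j, 0 ≤ P i j) (hsub : ∀ i, ∑ j, P i j ≤ 1) {w c x y : Fin n → ℝ}
    (hx : IsEquil P w c x) (hy : IsEquil P w c y) (i : Fin n) :
    |(Pᵀ.mulVec x + c) i - (Pᵀ.mulVec y + c) i| ≤ |x i - y i| := by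
  have hle : ∀ j ∈ Finset.univ,
      |x j - y j| ≤ |(Pᵀ.mulVec x + c) j - (Pᵀ.mulVec y + c) j| := fun j _ => by
    conv_lhs => rw [hx.apply j, hy.apply j]
    exact abs_clamp_sub_clamp_le _ _ _
  have hsum : ∑ j, |(Pᵀ.mulVec x + c) j - (Pᵀ.mulVec y + c) j| ≤ ∑ j, |x j - y j| := by
    simpa [Matrix.mulVec_sub] using sum_abs_transpose_mulVec_le_s6 hP hsub (x - y)
  exact ((Finset.sum_eq_sum_iff_of_le hle).1
    ((Finset.sum_le_sum hle).antisymm hsum) i (Finset.mem_univ i)).ge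

/-- At a node where one equilibrium is strictly saturated, all equilibria have the same
unsaturated inflow. -/
theorem IsEquil.inflow_eq {n : ℕ} {P : Matrix (Fin n) (Fin n) ℝ}
    (hP : ∀ i j, 0 ≤ P i j) (hsub : ∀ i, ∑ j, P i j ≤ 1) {w c x y : Fin n → ℝ}
    (hw : 0 ≤ w) (hx : IsEquil P w c x) (hy : IsEquil P w c y) {i : Fin n}
    (hi : (Pᵀ.mulVec x + c) i < 0 ∨ w i < (Pᵀ.mulVec x + c) i) :
    (Pᵀ.mulVec x + c) i = (Pᵀ.mulVec y + c) i := by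
  refine eq_of_abs_sub_le_abs_clamp_sub_clamp (hw i) ?_ hi
  rw [← hx.apply i, ← hy.apply i]
  exact hx.abs_inflow_sub_le hP hsub hy i

/-- there is a partition `V₊ ∪ V₀ ∪ V₋` of the node set, depending only on
`(P, w, c)`, such that every equilibrium is `0` on `V₋`, equals `w` on `V₊`, and solves
the unsaturated linear equation on `V₀`; moreover any two equilibria agree on `V₋ ∪ V₊`. -/
theorem fundamental_partition
    {n : ℕ} (hn : 1 ≤ n) (P : Matrix (Fin n) (Fin n) ℝ)
    (hP : ∀ i j, 0 ≤ P i j) (hsub : ∀ i, ∑ j, P i j ≤ 1)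
    (w : Fin n → ℝ) (hw : 0 ≤ w) (c : Fin n → ℝ) :
    ∃ Vp V0 Vm : Set (Fin n),
      Vp ∪ V0 ∪ Vm = Set.univ ∧
      Disjoint Vp V0 ∧ Disjoint Vp Vm ∧ Disjoint V0 Vm ∧
      (∀ x, IsEquil P w c x →
        (∀ i ∈ Vm, x i = 0) ∧ (∀ i ∈ Vp, x i = w i) ∧
        (∀ i ∈ V0, x i = c i + Pᵀ.mulVec x i)) ∧
      (∀ x y, IsEquil P w c x → IsEquil P w c y → ∀ i ∈ Vm ∪ Vp, x i = y i) := by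
  have hm : ∀ x y i, IsEquil P w c x → (Pᵀ.mulVec x + c) i < 0 → IsEquil P w c y →
      (Pᵀ.mulVec y + c) i < 0 := fun x y i hx hi hy =>
    (hx.inflow_eq hP hsub hw hy (Or.inl hi)).symm.trans_lt hi
  have hp : ∀ x y i, IsEquil P w c x → w i < (Pᵀ.mulVec x + c) i → IsEquil P w c y →
      w i < (Pᵀ.mulVec y + c) i := fun x y i hx hi hy =>
    hi.trans_eq (hx.inflow_eq hP hsub hw hy (Or.inr hi))
  let Vm : Set (Fin n) := {i | ∃ x, IsEquil P w c x ∧ (Pᵀ.mulVec x + c) i < 0}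
  let Vp : Set (Fin n) := {i | ∃ x, IsEquil P w c x ∧ w i < (Pᵀ.mulVec x + c) i}
  have hzero : ∀ x, IsEquil P w c x → ∀ i ∈ Vm, x i = 0 := by
    rintro y hy i ⟨x, hx, hi⟩
    rw [hy.apply i, max_eq_right (hm x y i hx hi hy).le]
    exact min_eq_left (hw i)
  have hfull : ∀ x, IsEquil P w c x → ∀ i ∈ Vp, x i = w i := by
    rintro y hy i ⟨x, hx, hi⟩
    rw [hy.apply i, min_eq_right (le_max_of_le_left (hp x y i hx hi hy).le)]
  have hdisj : Disjoint Vp Vm := by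
    refine Set.disjoint_left.2 ?_
    rintro i ⟨x, hx, hi⟩ ⟨y, hy, hi'⟩
    exact lt_irrefl _ ((hi'.trans_le (hw i)).trans (hp x y i hx hi hy))
  refine ⟨Vp, (Vp ∪ Vm)ᶜ, Vm, ?_, ?_, hdisj, ?_, fun x hx => ⟨hzero x hx, hfull x hx, ?_⟩, ?_⟩
  · rw [Set.union_right_comm, Set.union_compl_self]
  · exact disjoint_compl_right.mono_left Set.subset_union_left
  · exact disjoint_compl_left.mono_right Set.subset_union_right
  · intro i hi
    have hi₁ : (Pᵀ.mulVec x + c) i ≤ w i := not_lt.1 fun h => hi (Or.inl ⟨x, hx, h⟩)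
    have hi₂ : 0 ≤ (Pᵀ.mulVec x + c) i := not_lt.1 fun h => hi (Or.inr ⟨x, hx, h⟩)
    rw [hx.apply i, max_eq_left hi₂, min_eq_left hi₁, Pi.add_apply, add_comm]
  · rintro x y hx hy i (hi | hi)
    · rw [hzero x hx i hi, hzero y hy i hi]
    · rw [hfull x hx i hi, hfull y hy i hi]
end

section
/- Let n ≥ 1 and let P be an n×n irreducible row-stochastic matrix. Let c ∈ ℝ^n be a zero-sum vector, i.e., Σ_i c_i = 0. Then the series ν = (1/2) Σ_{k≥0} ((I + Pᵀ)/2)^k c converges in ℝ^n, and its sum ν satisfies ν = Pᵀν + c. -/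
open Matrix Finset Filter Topology

/-- Reachability in the graph `G_P`. -/
def Reaches {n : ℕ} (P : Matrix (Fin n) (Fin n) ℝ) : Fin n → Fin n → Prop :=
  Relation.ReflTransGen (fun a b => 0 < P a b)

namespace Matrix

variable {ι : Type*} [Fintype ι]

theorem mul_apply_pos {M N : Matrix ι ι ℝ} (hM : ∀ i j, 0 ≤ M i j) (hN : ∀ i j, 0 ≤ N i j)
    {a b c : ι} (hab : 0 < M a b) (hbc : 0 < N b c) : 0 < (M * N) a c := by
  rw [mul_apply]
  exact sum_pos' (fun j _ => mul_nonneg (hM a j) (hN j c)) ⟨b, mem_univ b, mul_pos hab hbc⟩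

/-- A column-stochastic matrix with entries at least `ε` contracts the `ℓ¹` norm on
zero-sum vectors. -/
theorem sum_abs_mulVec_le {Q : Matrix ι ι ℝ} {ε : ℝ} (hε : ∀ i j, ε ≤ Q i j)
    (hQ : ∀ j, ∑ i, Q i j = 1) {x : ι → ℝ} (hx : ∑ i, x i = 0) :
    ∑ i, |(Q *ᵥ x) i| ≤ (1 - Fintype.card ι * ε) * ∑ i, |x i| := by
  have hrow (i : ι) : |(Q *ᵥ x) i| ≤ ∑ j, (Q i j - ε) * |x j| := by
    have hsub : (Q *ᵥ x) i = ∑ j, (Q i j - ε) * x j := by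
      simp only [sub_mul, sum_sub_distrib, ← mul_sum, hx, mul_zero, sub_zero]
      rfl
    rw [hsub]
    refine (abs_sum_le_sum_abs _ _).trans_eq (sum_congr rfl fun j _ => ?_)
    rw [abs_mul, abs_of_nonneg (sub_nonneg.2 (hε i j))]
  calc ∑ i, |(Q *ᵥ x) i| ≤ ∑ i, ∑ j, (Q i j - ε) * |x j| := sum_le_sum fun i _ => hrow i
    _ = ∑ j, (∑ i, (Q i j - ε)) * |x j| := by
      rw [sum_comm]
      simp only [sum_mul]
    _ = (1 - Fintype.card ι * ε) * ∑ i, |x i| := by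
      simp [sum_sub_distrib, hQ, mul_sum]

variable [DecidableEq ι]

theorem eventually_pow_apply_pos {M : Matrix ι ι ℝ} (hM : M ∈ colStochastic ℝ ι)
    (hdiag : ∀ i, 0 < M i i) {i j : ι}
    (h : Relation.ReflTransGen (fun a b => 0 < M b a) i j) :
    ∀ᶠ k in atTop, 0 < (M ^ k) j i := by
  have hnn (k : ℕ) (a b : ι) : 0 ≤ (M ^ k) a b := nonneg_of_mem_colStochastic (pow_mem hM k)
  have hM0 (a b : ι) : 0 ≤ M a b := nonneg_of_mem_colStochastic hM
  induction h with
  | refl =>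
    refine Eventually.of_forall fun k => ?_
    induction k with
    | zero => simp
    | succ k ih =>
      rw [pow_succ]
      exact mul_apply_pos (hnn k) hM0 ih (hdiag i)
  | tail _ hbc ih =>
    rw [← map_add_atTop_eq_nat 1, eventually_map]
    filter_upwards [ih] with k hk
    rw [pow_succ']
    exact mul_apply_pos hM0 (hnn k) hbc hk

/-- The powers of a primitive column-stochastic matrix are summable on zero-sum vectors. -/
theorem summable_pow_mulVec [Nonempty ι] {M : Matrix ι ι ℝ} (hM : M ∈ colStochastic ℝ ι)
    {m : ℕ} (hpos : ∀ i j, 0 < (M ^ m) i j) {c : ι → ℝ} (hc : ∑ i, c i = 0) :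
    Summable fun k : ℕ => (M ^ k) *ᵥ c := by
  obtain ⟨p, hp⟩ := Finite.exists_min fun p : ι × ι => (M ^ m) p.1 p.2
  set ε := (M ^ m) p.1 p.2
  have hε : 0 < Fintype.card ι * ε :=
    mul_pos (Nat.cast_pos.2 Fintype.card_pos) (hpos p.1 p.2)
  set f : ℕ → ℝ := fun k => ∑ i, |((M ^ k) *ᵥ c) i|
  have hf0 (k : ℕ) : 0 ≤ f k := sum_nonneg fun i _ => abs_nonneg _
  have hstep (k : ℕ) : f (m + k) ≤ (1 - Fintype.card ι * ε) * f k := by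
    have hzero : ∑ i, ((M ^ k) *ᵥ c) i = 0 := by
      rw [sum_mulVec_of_mem_colStochastic (pow_mem hM k), hc]
    have h := sum_abs_mulVec_le (Q := M ^ m) (fun i j => hp (i, j))
      (sum_col_of_mem_colStochastic (pow_mem hM m)) hzero
    rwa [mulVec_mulVec, ← pow_add] at h
  have hsum : Summable f := by
    refine summable_of_sum_range_le (c := (∑ k ∈ range m, f k) / (Fintype.card ι * ε)) hf0
      fun N => ?_
    rw [le_div_iff₀ hε]
    have hle : ∑ k ∈ range N, f k ≤ ∑ k ∈ range (m + N), f k :=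
      sum_le_sum_of_subset_of_nonneg (range_mono (Nat.le_add_left N m)) fun k _ _ => hf0 k
    have hshift : ∑ k ∈ range N, f (m + k) ≤ (1 - Fintype.card ι * ε) * ∑ k ∈ range N, f k := by
      rw [mul_sum]
      exact sum_le_sum fun k _ => hstep k
    rw [sum_range_add] at hle
    linarith
  refine Pi.summable.2 fun i => Summable.of_norm_bounded hsum fun k => ?_
  exact single_le_sum (f := fun i => |((M ^ k) *ᵥ c) i|) (fun j _ => abs_nonneg _) (mem_univ i)

end Matrix

/-- for an irreducible row-stochastic matrix `P` and a zero-sum vector `c`,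
the series `ν = (1/2) ∑_{k ≥ 0} ((I + Pᵀ)/2)^k c` converges and its sum satisfies
`ν = Pᵀ ν + c`. -/
theorem series_nu_converges
    {n : ℕ} (hn : 1 ≤ n) (P : Matrix (Fin n) (Fin n) ℝ)
    (hP : ∀ i j, 0 ≤ P i j) (hst : ∀ i, ∑ j, P i j = 1)
    (hirr : ∀ i j, Reaches P i j)
    (c : Fin n → ℝ) (hc : ∑ i, c i = 0) :
    ∃ ν : Fin n → ℝ,
      HasSum (fun k : ℕ => (2 : ℝ)⁻¹ • (((2 : ℝ)⁻¹ • (1 + Pᵀ)) ^ k).mulVec c) ν ∧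
      ν = Pᵀ.mulVec ν + c := by
  have : Nonempty (Fin n) := ⟨⟨0, hn⟩⟩
  set B : Matrix (Fin n) (Fin n) ℝ := (2 : ℝ)⁻¹ • (1 + Pᵀ) with hBdef
  have hPt : Pᵀ ∈ colStochastic ℝ (Fin n) :=
    transpose_mem_colStochastic_iff_mem_rowStochastic.2 (mem_rowStochastic_iff_sum.2 ⟨hP, hst⟩)
  have hB : B ∈ colStochastic ℝ (Fin n) := by
    rw [hBdef, smul_add]
    exact convex_colStochastic (one_mem _) hPt (by norm_num) (by norm_num) (by norm_num)
  have hdiag (i : Fin n) : 0 < B i i := by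
    have := hP i i
    simp only [hBdef, Matrix.smul_apply, Matrix.add_apply, one_apply_eq, transpose_apply, smul_eq_mul]
    positivity
  have hedge (a b : Fin n) (hab : 0 < P a b) : 0 < B b a := by
    have : (0 : ℝ) ≤ (1 : Matrix (Fin n) (Fin n) ℝ) b a := by
      rw [one_apply]
      split_ifs <;> norm_num
    simp only [hBdef, Matrix.smul_apply, Matrix.add_apply, transpose_apply, smul_eq_mul]
    positivity
  obtain ⟨m, hm⟩ : ∃ m, ∀ i j, 0 < (B ^ m) i j :=
    (eventually_all.2 fun i => eventually_all.2 fun j =>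
      eventually_pow_apply_pos hB hdiag (Relation.ReflTransGen.mono hedge j i (hirr j i))).exists
  obtain ⟨s, hs⟩ := summable_pow_mulVec hB hm hc
  have hshift : HasSum (fun k : ℕ => (B ^ (k + 1)) *ᵥ c) (B *ᵥ s) := by
    have h := hs.map B.mulVecLin (Continuous.matrix_mulVec continuous_const continuous_id)
    simpa [Function.comp_def, pow_succ'] using h
  have hfix : s = c + B *ᵥ s := by
    have h := (hasSum_nat_add_iff' 1).2 hs
    have h' := h.unique hshift
    simp only [range_one, sum_singleton, pow_zero, one_mulVec] at h'
    rw [← h', add_sub_cancel]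
  refine ⟨(2 : ℝ)⁻¹ • s, hs.const_smul _, ?_⟩
  rw [hBdef, smul_mulVec, add_mulVec, one_mulVec] at hfix
  rw [mulVec_smul]
  ext i
  have hi := congrFun hfix i
  simp only [Pi.add_apply, Pi.smul_apply, smul_eq_mul] at hi ⊢
  linarith
end

section
/- Let n ≥ 1, let P be an n×n nonnegative row sub-stochastic matrix, let w ∈ ℝ^n with w ≥ 0, and let c ∈ ℝ^n. Let T ⊆ {1,…,n} be the transient part of the graph G_P, i.e., the set of nodes not belonging to any irreducible trapping set. Then any two equilibria x and y of the network (P, w) with exogenous flow c agree on T: x_i = y_i for every i ∈ T. -/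
open Matrix Finset Filter Topology

/-- A trapping set of `G_P`: a nonempty set of nodes with no links pointing out of it. -/
def TrapSet {n : ℕ} (P : Matrix (Fin n) (Fin n) ℝ) (S : Finset (Fin n)) : Prop :=
  S.Nonempty ∧ ∀ i ∈ S, ∀ j ∉ S, P i j = 0

/-- An irreducible trapping set: a trapping set not strictly containing any trapping set. -/
def IrredTrapSet {n : ℕ} (P : Matrix (Fin n) (Fin n) ℝ) (S : Finset (Fin n)) : Prop :=
  TrapSet P S ∧ ∀ S', TrapSet P S' → S' ⊆ S → S' = S

/-- Saturation is 1-Lipschitz, so the entrywise distance of two equilibria is a subinvariant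
measure of `P`. -/
lemma abs_sub_le_sum_of_isEquil {n : ℕ} {P : Matrix (Fin n) (Fin n) ℝ}
    (hP : ∀ i j, 0 ≤ P i j) {w c x y : Fin n → ℝ}
    (hx : IsEquil P w c x) (hy : IsEquil P w c y) (j : Fin n) :
    |x j - y j| ≤ ∑ i, P i j * |x i - y i| := by
  have hx' : x j = min (max (∑ i, P i j * x i + c j) 0) (w j) := congrFun hx j
  have hy' : y j = min (max (∑ i, P i j * y i + c j) 0) (w j) := congrFun hy j
  calc |x j - y j|
      ≤ |(∑ i, P i j * x i + c j) - (∑ i, P i j * y i + c j)| := by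
        rw [hx', hy']
        refine (abs_min_sub_min_le_max _ _ _ _).trans (max_le ?_ (by simp))
        exact (abs_max_sub_max_le_max _ _ _ _).trans (max_le le_rfl (by simp))
    _ = |∑ i, P i j * (x i - y i)| := by
        simp only [mul_sub, Finset.sum_sub_distrib]
        congr 1
        ring
    _ ≤ ∑ i, |P i j * (x i - y i)| := Finset.abs_sum_le_sum_abs _ _
    _ = ∑ i, P i j * |x i - y i| := by simp only [abs_mul, abs_of_nonneg (hP _ _)]

/-- A subinvariant measure of a sub-stochastic matrix is invariant. -/
lemma sum_eq_of_subinvariant {n : ℕ} {P : Matrix (Fin n) (Fin n) ℝ}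
    (hsub : ∀ i, ∑ j, P i j ≤ 1) {d : Fin n → ℝ}
    (hd : ∀ i, 0 ≤ d i) (hinv : ∀ j, d j ≤ ∑ i, P i j * d i) (j : Fin n) :
    d j = ∑ i, P i j * d i := by
  refine (Finset.sum_eq_sum_iff_of_le fun j _ => hinv j).1 ?_ j (Finset.mem_univ j)
  refine le_antisymm (Finset.sum_le_sum fun j _ => hinv j) ?_
  rw [Finset.sum_comm]
  refine Finset.sum_le_sum fun i _ => ?_
  rw [← Finset.sum_mul]
  exact mul_le_of_le_one_left (hd i) (hsub i)

/-- A subinvariant measure puts no flow on the links entering a trapping set. -/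
lemma TrapSet.eq_zero_of_notMem {n : ℕ} {P : Matrix (Fin n) (Fin n) ℝ}
    (hP : ∀ i j, 0 ≤ P i j) (hsub : ∀ i, ∑ j, P i j ≤ 1) {d : Fin n → ℝ}
    (hd : ∀ i, 0 ≤ d i) (hinv : ∀ j, d j ≤ ∑ i, P i j * d i)
    {R : Finset (Fin n)} (hR : TrapSet P R) {i k : Fin n} (hi : i ∉ R) (hdi : 0 < d i)
    (hk : k ∈ R) : P i k = 0 := by
  have hle : ∑ i ∈ Rᶜ, d i ≤ ∑ i ∈ Rᶜ, (∑ j ∈ Rᶜ, P i j) * d i :=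
    calc ∑ j ∈ Rᶜ, d j ≤ ∑ j ∈ Rᶜ, ∑ i, P i j * d i := Finset.sum_le_sum fun j _ => hinv j
      _ = ∑ i, (∑ j ∈ Rᶜ, P i j) * d i := by
        rw [Finset.sum_comm]
        simp only [Finset.sum_mul]
      _ = ∑ i ∈ Rᶜ, (∑ j ∈ Rᶜ, P i j) * d i := by
        refine (Finset.sum_subset (Finset.subset_univ _) fun l _ hl => ?_).symm
        rw [Finset.sum_eq_zero, zero_mul]
        intro j hj
        exact hR.2 l (by simpa using hl) j (by simpa using hj)
  have hrow : ∀ l, ∑ j ∈ R, P l j + ∑ j ∈ Rᶜ, P l j ≤ 1 := fun l =>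
    (Finset.sum_add_sum_compl R _).trans_le (hsub l)
  have hterm : ∀ l ∈ Rᶜ, (∑ j ∈ Rᶜ, P l j) * d l ≤ d l := fun l _ =>
    mul_le_of_le_one_left (hd l)
      (by linarith [hrow l, Finset.sum_nonneg fun j (_ : j ∈ R) => hP l j])
  have heq := (Finset.sum_eq_sum_iff_of_le hterm).1
    (le_antisymm (Finset.sum_le_sum hterm) hle) i (by simpa using hi)
  have hone : ∑ j ∈ Rᶜ, P i j = 1 := by
    simpa [hdi.ne'] using heq
  have hPk := Finset.single_le_sum (fun j _ => hP i j) hk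
  exact le_antisymm (by linarith [hrow i]) (hP i k)

/-- The support of a subinvariant measure is covered by irreducible trapping sets. -/
lemma exists_irredTrapSet_of_pos {n : ℕ} {P : Matrix (Fin n) (Fin n) ℝ}
    (hP : ∀ i j, 0 ≤ P i j) (hsub : ∀ i, ∑ j, P i j ≤ 1) {d : Fin n → ℝ}
    (hd : ∀ i, 0 ≤ d i) (hinv : ∀ j, d j ≤ ∑ i, P i j * d i)
    {i : Fin n} (hi : 0 < d i) : ∃ S, IrredTrapSet P S ∧ i ∈ S := by
  have hsupp : ∀ j k, 0 < d j → d k = 0 → P j k = 0 := by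
    intro j k hj hk
    have hsum := sum_eq_of_subinvariant hsub hd hinv k
    rw [hk, eq_comm, Finset.sum_eq_zero_iff_of_nonneg
      fun l _ => mul_nonneg (hP l k) (hd l)] at hsum
    exact (mul_eq_zero.1 (hsum j (Finset.mem_univ j))).resolve_right hj.ne'
  obtain ⟨S, hS⟩ := Set.Finite.exists_minimal
    (Set.toFinite {S : Finset (Fin n) | TrapSet P S ∧ i ∈ S ∧ ∀ j ∈ S, 0 < d j})
    ⟨Finset.univ.filter fun j => 0 < d j, by
      refine ⟨⟨⟨i, by simpa using hi⟩, fun j hj k hk => hsupp j k (by simpa using hj) ?_⟩,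
        by simpa using hi, by simp⟩
      exact le_antisymm (by simpa using hk) (hd k)⟩
  obtain ⟨⟨hStrap, hiS, hSpos⟩, hmin⟩ := hS
  refine ⟨S, ⟨hStrap, fun S' hS' hsub' => hsub'.antisymm ?_⟩, hiS⟩
  by_cases hiS' : i ∈ S'
  · exact hmin ⟨hS', hiS', fun j hj => hSpos j (hsub' hj)⟩ hsub'
  · have hle : S ⊆ S \ S' := by
      refine hmin ⟨⟨⟨i, Finset.mem_sdiff.2 ⟨hiS, hiS'⟩⟩, fun j hj k hk => ?_⟩,
        Finset.mem_sdiff.2 ⟨hiS, hiS'⟩, fun j hj => hSpos j (Finset.mem_sdiff.1 hj).1⟩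
        Finset.sdiff_subset
      obtain ⟨hjS, hjS'⟩ := Finset.mem_sdiff.1 hj
      by_cases hkS : k ∈ S
      · have hkS' : k ∈ S' := by
          by_contra h
          exact hk (Finset.mem_sdiff.2 ⟨hkS, h⟩)
        exact hS'.eq_zero_of_notMem hP hsub hd hinv hjS' (hSpos j hjS) hkS'
      · exact hStrap.2 j hjS k hkS
    obtain ⟨m, hm⟩ := hS'.1
    exact absurd hm (Finset.mem_sdiff.1 (hle (hsub' hm))).2

/-- any two equilibria agree on the transient part of the graph `G_P`,
i.e., on the set of nodes belonging to no irreducible trapping set. -/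
theorem equilibria_agree_on_transient_part
    {n : ℕ} (hn : 1 ≤ n) (P : Matrix (Fin n) (Fin n) ℝ)
    (hP : ∀ i j, 0 ≤ P i j) (hsub : ∀ i, ∑ j, P i j ≤ 1)
    (w : Fin n → ℝ) (hw : 0 ≤ w) (c : Fin n → ℝ)
    (x y : Fin n → ℝ) (hx : IsEquil P w c x) (hy : IsEquil P w c y) :
    ∀ i : Fin n, (∀ S : Finset (Fin n), IrredTrapSet P S → i ∉ S) → x i = y i := by
  intro i hi
  by_contra hne
  obtain ⟨S, hS, hiS⟩ := exists_irredTrapSet_of_pos hP hsub (d := fun j => |x j - y j|)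
    (fun j => abs_nonneg _) (abs_sub_le_sum_of_isEquil hP hx hy)
    (abs_pos.2 (sub_ne_zero.2 hne))
  exact hi S hS hiS
end

section
/- Let n ≥ 1, let P be an n×n nonnegative row sub-stochastic matrix, and let w ∈ ℝ^n with w ≥ 0. Let U = {c ∈ ℝ^n : the network (P, w) with exogenous flow c has exactly one equilibrium}, and for c ∈ U let x(c) denote that unique equilibrium. Then the map c ↦ x(c) is continuous on U: for every c* ∈ U and every sequence (c(k)) in U with c(k) → c*, one has x(c(k)) → x(c*). -/
open Matrix Finset Filter Topology

theorem sat_mem_Icc {n : ℕ} {w : Fin n → ℝ} (hw : 0 ≤ w) (y : Fin n → ℝ) :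
    sat w y ∈ Set.Icc 0 w :=
  ⟨fun i => le_min (le_max_right _ _) (hw i), fun _ => min_le_right _ _⟩

/-- The equilibrium relation between exogenous flows and states has a closed graph. -/
theorem isClosed_setOf_isEquil {n : ℕ} (P : Matrix (Fin n) (Fin n) ℝ) (w : Fin n → ℝ) :
    IsClosed {q : (Fin n → ℝ) × (Fin n → ℝ) | IsEquil P w q.1 q.2} :=
  isClosed_eq continuous_snd <| (continuous_sat w).comp <|
    (continuous_const.matrix_mulVec continuous_snd).add continuous_fst

/-- on the set `U` of exogenous flows with a unique equilibrium, the map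
`c ↦ x(c)` is (sequentially) continuous: if `c* ∈ U` and `c(k) ∈ U` for all `k` with
`c(k) → c*`, then `x(c(k)) → x(c*)`. -/
theorem unique_equilibrium_map_continuous
    {n : ℕ} (hn : 1 ≤ n) (P : Matrix (Fin n) (Fin n) ℝ)
    (hP : ∀ i j, 0 ≤ P i j) (hsub : ∀ i, ∑ j, P i j ≤ 1)
    (w : Fin n → ℝ) (hw : 0 ≤ w)
    (xu : (Fin n → ℝ) → (Fin n → ℝ))
    (hxu : ∀ c : Fin n → ℝ, (∃! x, IsEquil P w c x) → IsEquil P w c (xu c)) :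
    ∀ cstar : Fin n → ℝ, (∃! x, IsEquil P w cstar x) →
      ∀ cseq : ℕ → Fin n → ℝ,
        (∀ k, ∃! x, IsEquil P w (cseq k) x) →
        Tendsto cseq atTop (𝓝 cstar) →
        Tendsto (fun k => xu (cseq k)) atTop (𝓝 (xu cstar)) := by
  intro cstar hstar cseq hseq hlim
  refine isCompact_Icc.tendsto_nhds_of_unique_mapClusterPt (s := Set.Icc 0 w)
    (Eventually.of_forall fun k => ?_) fun x _ hx => ?_
  · have h : xu (cseq k) = sat w _ := hxu _ (hseq k)
    exact h ▸ sat_mem_Icc hw _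
  · obtain ⟨ψ, hψ, hψx⟩ := hx.tendsto_subseq
    have hmem : IsEquil P w cstar x := (isClosed_setOf_isEquil P w).mem_of_tendsto
      ((hlim.comp hψ.tendsto_atTop).prodMk_nhds hψx)
      (Eventually.of_forall fun k => hxu _ (hseq (ψ k)))
    exact hstar.unique hmem (hxu _ hstar)
end

section
/- Let n ≥ 1, let P be an n×n nonnegative row sub-stochastic matrix, and let w ∈ ℝ^n with w_i > 0 for all i. Let S_1, …, S_m be the distinct irreducible trapping sets of G_P and T the transient part, and suppose that for each l the restricted matrix P_{S_l S_l} is row-stochastic, with invariant probability vector π^{(l)} ∈ ℝ^{S_l} (π^{(l)} = (P_{S_l S_l})ᵀ π^{(l)}, Σ_{i∈S_l} π^{(l)}_i = 1, π^{(l)}_i > 0). For c ∈ ℝ^n let x̲(c) and x̄(c) denote the minimal and maximal equilibrium of (P, w) with exogenous flow c. Then, for every real p ≥ 1, the supremum over c ∈ ℝ^n of Σ_{i=1}^n |x̄(c)_i − x̲(c)_i|^p is attained (at c = 0) and equals Σ_{l=1}^m ( min_{i∈S_l} (w_i / π^{(l)}_i) )^p · Σ_{i∈S_l} (π^{(l)}_i)^p.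 -/
open Matrix Finset Filter Topology

/-- Every trapping set contains an irreducible trapping set. -/
lemma TrapSet.exists_irredTrapSet_subset {n : ℕ} {P : Matrix (Fin n) (Fin n) ℝ}
    (U : Finset (Fin n)) (hU : TrapSet P U) : ∃ S, IrredTrapSet P S ∧ S ⊆ U := by
  induction U using Finset.strongInduction with
  | H U ih =>
    by_cases h : ∀ S', TrapSet P S' → S' ⊆ U → S' = U
    · exact ⟨U, ⟨hU, h⟩, Finset.Subset.refl U⟩
    · push Not at h
      obtain ⟨S', hS', hsub, hne⟩ := h
      obtain ⟨S, hS, hSS'⟩ := ih S' (hsub.ssubset_of_ne hne) hS'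
      exact ⟨S, hS, hSS'.trans hsub⟩

/-- Two irreducible trapping sets with a common node coincide. -/
lemma IrredTrapSet.eq_of_mem {n : ℕ} {P : Matrix (Fin n) (Fin n) ℝ} {A B : Finset (Fin n)}
    (hA : IrredTrapSet P A) (hB : IrredTrapSet P B) {i : Fin n} (hiA : i ∈ A) (hiB : i ∈ B) :
    A = B := by
  have hT : TrapSet P (A ∩ B) := by
    refine ⟨⟨i, Finset.mem_inter.2 ⟨hiA, hiB⟩⟩, fun j hj k hk => ?_⟩
    rw [Finset.mem_inter] at hj hk
    by_cases hkA : k ∈ A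
    · exact hB.1.2 j hj.2 k fun hkB => hk ⟨hkA, hkB⟩
    · exact hA.1.2 j hj.1 k hkA
  exact (hA.2 _ hT Finset.inter_subset_left).symm.trans (hB.2 _ hT Finset.inter_subset_right)

/-- A nonnegative vector dominated by its image under a sub-stochastic flow is invariant. -/
lemma eq_sum_of_le_sum {n : ℕ} {P : Matrix (Fin n) (Fin n) ℝ} (hsub : ∀ i, ∑ j, P i j ≤ 1)
    {d : Fin n → ℝ} (hd : 0 ≤ d) (hle : ∀ j, d j ≤ ∑ i, P i j * d i) (j : Fin n) :
    d j = ∑ i, P i j * d i := by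
  have hsum : ∑ j, ∑ i, P i j * d i ≤ ∑ j, d j := by
    rw [Finset.sum_comm]
    refine Finset.sum_le_sum fun i _ => ?_
    rw [← Finset.sum_mul]
    exact mul_le_of_le_one_left (hd i) (hsub i)
  exact (Finset.sum_eq_sum_iff_of_le fun j _ => hle j).1
    (le_antisymm (Finset.sum_le_sum fun j _ => hle j) hsum) j (Finset.mem_univ j)

/-- A nonnegative invariant vector is supported on the irreducible trapping sets. -/
lemma exists_irredTrapSet_of_invariant_pos {n : ℕ} {P : Matrix (Fin n) (Fin n) ℝ}
    (hP : ∀ i j, 0 ≤ P i j) (hsub : ∀ i, ∑ j, P i j ≤ 1)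
    {d : Fin n → ℝ} (hd : 0 ≤ d) (hinv : ∀ j, d j = ∑ i, P i j * d i)
    {i : Fin n} (hi : 0 < d i) : ∃ A, IrredTrapSet P A ∧ i ∈ A := by
  classical
  by_contra! hcon
  set T : Finset (Fin n) := {k | ∀ A, IrredTrapSet P A → k ∉ A} with hTdef
  have hT : ∀ k, k ∈ T ↔ ∀ A, IrredTrapSet P A → k ∉ A := fun k => by simp [hTdef]
  have hsubT : ∀ k, ∑ j ∈ T, P k j ≤ 1 := fun k =>
    (Finset.sum_le_univ_sum_of_nonneg fun j => hP k j).trans (hsub k)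
  have hflow : ∑ j ∈ T, d j = ∑ k ∈ T, (∑ j ∈ T, P k j) * d k := by
    calc ∑ j ∈ T, d j = ∑ j ∈ T, ∑ k, P k j * d k := Finset.sum_congr rfl fun j _ => hinv j
      _ = ∑ k, (∑ j ∈ T, P k j) * d k := by
        rw [Finset.sum_comm]
        exact Finset.sum_congr rfl fun k _ => (Finset.sum_mul _ _ _).symm
      _ = ∑ k ∈ T, (∑ j ∈ T, P k j) * d k := by
        refine (Finset.sum_subset (Finset.subset_univ T) fun k _ hk => ?_).symm
        rw [hT] at hk
        push Not at hk
        obtain ⟨A, hA, hkA⟩ := hk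
        rw [Finset.sum_eq_zero fun j hj => hA.1.2 k hkA j ((hT j).1 hj A hA), zero_mul]
  have hfull : ∀ k ∈ T, 0 < d k → ∑ j ∈ T, P k j = 1 := fun k hk hdk => by
    have := (Finset.sum_eq_sum_iff_of_le
      fun k _ => mul_le_of_le_one_left (hd k) (hsubT k)).1 hflow.symm k hk
    exact (mul_eq_right₀ hdk.ne').1 this
  have htrap : TrapSet P (T.filter fun k => 0 < d k) := by
    refine ⟨⟨i, Finset.mem_filter.2 ⟨(hT i).2 hcon, hi⟩⟩, fun k hk j hj => ?_⟩
    rw [Finset.mem_filter] at hk hj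
    by_contra hne
    have hpos : 0 < P k j := lt_of_le_of_ne (hP k j) (Ne.symm hne)
    refine hj ⟨?_, ?_⟩
    · by_contra hjT
      have h1 : ∑ l ∈ insert j T, P k l ≤ 1 :=
        (Finset.sum_le_univ_sum_of_nonneg fun l => hP k l).trans (hsub k)
      rw [Finset.sum_insert hjT, hfull k hk.1 hk.2] at h1
      linarith
    · rw [hinv j]
      exact (mul_pos hpos hk.2).trans_le (Finset.single_le_sum
        (f := fun l => P l j * d l) (fun l _ => mul_nonneg (hP l j) (hd l)) (Finset.mem_univ k))
  obtain ⟨A, hA, hAsub⟩ := htrap.exists_irredTrapSet_subset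
  obtain ⟨k, hk⟩ := hA.1.1
  exact (hT k).1 (Finset.mem_filter.1 (hAsub hk)).1 A hA hk

/-- A nonnegative invariant vector on an irreducible trapping set that vanishes somewhere
vanishes everywhere. -/
lemma IrredTrapSet.eq_zero_of_invariant {n : ℕ} {P : Matrix (Fin n) (Fin n) ℝ}
    (hP : ∀ i j, 0 ≤ P i j) {A : Finset (Fin n)} (hA : IrredTrapSet P A) {e : Fin n → ℝ}
    (he : ∀ i ∈ A, 0 ≤ e i) (hinv : ∀ j ∈ A, e j = ∑ i ∈ A, P i j * e i)
    {k : Fin n} (hk : k ∈ A) (hek : e k = 0) : ∀ i ∈ A, e i = 0 := by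
  intro i hi
  by_contra hne
  have htrap : TrapSet P (A.filter fun k => 0 < e k) := by
    refine ⟨⟨i, Finset.mem_filter.2 ⟨hi, lt_of_le_of_ne (he i hi) (Ne.symm hne)⟩⟩,
      fun a ha b hb => ?_⟩
    rw [Finset.mem_filter] at ha hb
    by_cases hbA : b ∈ A
    · by_contra hab
      refine hb ⟨hbA, ?_⟩
      rw [hinv b hbA]
      exact (mul_pos (lt_of_le_of_ne (hP a b) (Ne.symm hab)) ha.2).trans_le
        (Finset.single_le_sum (f := fun l => P l b * e l)
          (fun l hl => mul_nonneg (hP l b) (he l hl)) ha.1)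
    · exact hA.1.2 a ha.1 b hbA
  have hkmem : k ∈ A.filter fun k => 0 < e k := by
    rw [hA.2 _ htrap (Finset.filter_subset _ _)]
    exact hk
  exact (Finset.mem_filter.1 hkmem).2.ne' hek

/-- A nonnegative invariant vector bounded by `w` on an irreducible trapping set is bounded by
the largest multiple of a positive invariant vector below `w`. -/
lemma IrredTrapSet.le_inf'_mul {n : ℕ} {P : Matrix (Fin n) (Fin n) ℝ}
    (hP : ∀ i j, 0 ≤ P i j) {A : Finset (Fin n)} (hA : IrredTrapSet P A) {q d w : Fin n → ℝ}
    (hq : ∀ i ∈ A, 0 < q i) (hqinv : ∀ j ∈ A, q j = ∑ i ∈ A, P i j * q i)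
    (hdinv : ∀ j ∈ A, d j = ∑ i ∈ A, P i j * d i)
    (hdw : ∀ i ∈ A, d i ≤ w i) :
    ∀ i ∈ A, d i ≤ A.inf' hA.1.1 (fun i => w i / q i) * q i := by
  obtain ⟨k, hk, hmin⟩ := A.exists_min_image (fun i => d i / q i) hA.1.1
  have hzero := hA.eq_zero_of_invariant hP (e := fun i => d i - d k / q k * q i)
    (fun i hi => sub_nonneg.2 ((le_div_iff₀ (hq i hi)).1 (hmin i hi)))
    (fun j hj => by
      conv_lhs => rw [hdinv j hj, hqinv j hj, Finset.mul_sum, ← Finset.sum_sub_distrib]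
      exact Finset.sum_congr rfl fun i _ => by ring)
    hk (by simp [div_mul_cancel₀ _ (hq k hk).ne'])
  intro i hi
  rw [sub_eq_zero.1 (hzero i hi)]
  refine mul_le_mul_of_nonneg_right (Finset.le_inf' _ _ fun j hj => ?_) (hq i hi).le
  rw [le_div_iff₀ (hq j hj), ← sub_eq_zero.1 (hzero j hj)]
  exact hdw j hj

/-- Saturation is monotone and nonexpansive along ordered pairs. -/
lemma sat_sub_sat_le {n : ℕ} (w : Fin n → ℝ) {u v : Fin n → ℝ} {i : Fin n} (h : u i ≤ v i) :
    sat w v i - sat w u i ≤ v i - u i := by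
  simp only [sat, min_def, max_def]
  split_ifs <;> linarith

lemma IsEquil.nonneg {n : ℕ} {P : Matrix (Fin n) (Fin n) ℝ} {w c x : Fin n → ℝ}
    (hw : 0 ≤ w) (h : IsEquil P w c x) : 0 ≤ x := by
  intro i
  rw [h]
  exact le_min (le_max_right _ _) (hw i)

lemma IsEquil.le {n : ℕ} {P : Matrix (Fin n) (Fin n) ℝ} {w c x : Fin n → ℝ}
    (h : IsEquil P w c x) : x ≤ w := by
  intro i
  rw [h]
  exact min_le_right _ _

/-- A vector between `0` and `w` that is invariant is an equilibrium for zero exogenous flow. -/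
lemma isEquil_zero_of_invariant {n : ℕ} {P : Matrix (Fin n) (Fin n) ℝ} {w z : Fin n → ℝ}
    (hz : 0 ≤ z) (hzw : z ≤ w) (hinv : ∀ j, z j = ∑ i, P i j * z i) : IsEquil P w 0 z := by
  have hPz : Pᵀ.mulVec z = z := funext fun j => (hinv j).symm
  funext i
  simp only [sat, hPz, add_zero]
  rw [max_eq_left (show 0 ≤ z i from hz i), min_eq_left (hzw i)]

/-- The difference of two ordered equilibria is invariant under the flow. -/
lemma IsEquil.sub_invariant {n : ℕ} {P : Matrix (Fin n) (Fin n) ℝ}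
    (hP : ∀ i j, 0 ≤ P i j) (hsub : ∀ i, ∑ j, P i j ≤ 1) {w c x y : Fin n → ℝ}
    (hx : IsEquil P w c x) (hy : IsEquil P w c y) (hxy : x ≤ y) (j : Fin n) :
    (y - x) j = ∑ i, P i j * (y - x) i := by
  refine eq_sum_of_le_sum hsub (sub_nonneg.2 hxy) (fun j => ?_) j
  have hdiff : (Pᵀ.mulVec y + c) j - (Pᵀ.mulVec x + c) j = ∑ i, P i j * (y - x) i := by
    simp [Matrix.mulVec, dotProduct, mul_sub, Finset.sum_sub_distrib]
  have hnonneg : 0 ≤ ∑ i, P i j * (y - x) i :=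
    Finset.sum_nonneg fun i _ => mul_nonneg (hP i j) (sub_nonneg.2 (hxy i))
  have hlip := sat_sub_sat_le w (u := Pᵀ.mulVec x + c) (v := Pᵀ.mulVec y + c) (i := j)
    (by linarith)
  rw [← hx, ← hy, hdiff] at hlip
  exact hlip

/-- the maximal `p`-th power gap between the maximal and minimal
equilibrium, over all exogenous flows `c`, is attained at `c = 0` and equals
`∑_l (min_{i ∈ S_l} w_i / π⁽ˡ⁾_i)^p ∑_{i ∈ S_l} (π⁽ˡ⁾_i)^p`, where `S_1, …, S_m` are the
irreducible trapping sets and `π⁽ˡ⁾` the invariant probability vector of the block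
`P_{S_l S_l}`. -/
theorem max_jump_discontinuity
    {n : ℕ} (hn : 1 ≤ n) (P : Matrix (Fin n) (Fin n) ℝ)
    (hP : ∀ i j, 0 ≤ P i j) (hsub : ∀ i, ∑ j, P i j ≤ 1)
    (w : Fin n → ℝ) (hw : ∀ i, 0 < w i)
    (m : ℕ) (S : Fin m → Finset (Fin n))
    (hSinj : Function.Injective S)
    (hSirr : ∀ l, IrredTrapSet P (S l))
    (hSall : ∀ S' : Finset (Fin n), IrredTrapSet P S' → ∃ l, S' = S l)
    (hstoc : ∀ l, ∀ i ∈ S l, ∑ j ∈ S l, P i j = 1)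
    (π : Fin m → Fin n → ℝ)
    (hπ1 : ∀ l, ∀ j ∈ S l, π l j = ∑ i ∈ S l, P i j * π l i)
    (hπ2 : ∀ l, ∑ j ∈ S l, π l j = 1)
    (hπ3 : ∀ l, ∀ j ∈ S l, 0 < π l j)
    (xlo xhi : (Fin n → ℝ) → (Fin n → ℝ))
    (hlo : ∀ c, IsEquil P w c (xlo c) ∧ ∀ y, IsEquil P w c y → xlo c ≤ y)
    (hhi : ∀ c, IsEquil P w c (xhi c) ∧ ∀ y, IsEquil P w c y → y ≤ xhi c)
    (p : ℝ) (hp : 1 ≤ p) :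
    (∑ i, |xhi 0 i - xlo 0 i| ^ p =
      ∑ l, ((S l).inf' (hSirr l).1.1 (fun i => w i / π l i)) ^ p *
        ∑ i ∈ S l, π l i ^ p) ∧
    ∀ c : Fin n → ℝ, ∑ i, |xhi c i - xlo c i| ^ p ≤
      ∑ l, ((S l).inf' (hSirr l).1.1 (fun i => w i / π l i)) ^ p *
        ∑ i ∈ S l, π l i ^ p := by
  classical
  set α : Fin m → ℝ := fun l => (S l).inf' (hSirr l).1.1 (fun i => w i / π l i) with hα
  have hα0 : ∀ l, 0 ≤ α l := fun l =>
    Finset.le_inf' _ _ fun i hi => (div_pos (hw i) (hπ3 l i hi)).le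
  have huniq : ∀ {l k i}, i ∈ S l → i ∈ S k → k = l := fun {l k i} hl hk =>
    hSinj ((hSirr k).eq_of_mem (hSirr l) hk hl)
  have hp0 : p ≠ 0 := by linarith
  -- the candidate largest gap
  set z : Fin n → ℝ := fun i => ∑ l, if i ∈ S l then α l * π l i else 0 with hz
  have hz_mem : ∀ {l i}, i ∈ S l → z i = α l * π l i := fun {l i} hi => by
    rw [hz]
    refine (Finset.sum_eq_single l (fun k _ hk => if_neg fun h => hk (huniq hi h))
      (by simp)).trans (if_pos hi)
  have hz_not : ∀ {i}, (∀ l, i ∉ S l) → z i = 0 := fun {i} hi =>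
    Finset.sum_eq_zero fun l _ => if_neg (hi l)
  have hz0 : 0 ≤ z := fun i => Finset.sum_nonneg fun l _ => by
    split_ifs with h
    · exact mul_nonneg (hα0 l) (hπ3 l i h).le
    · exact le_rfl
  have hzw : z ≤ w := fun i => by
    by_cases h : ∃ l, i ∈ S l
    · obtain ⟨l, hl⟩ := h
      rw [hz_mem hl, ← le_div_iff₀ (hπ3 l i hl)]
      exact Finset.inf'_le _ hl
    · push Not at h
      rw [hz_not h]
      exact (hw i).le
  -- a vector supported on the irreducible trapping sets flows blockwise
  have hblock : ∀ d : Fin n → ℝ, (∀ i, (∀ l, i ∉ S l) → d i = 0) → ∀ l, ∀ j ∈ S l,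
      ∑ i, P i j * d i = ∑ i ∈ S l, P i j * d i := fun d hd l j hj => by
    refine (Finset.sum_subset (Finset.subset_univ _) fun i _ hi => ?_).symm
    by_cases h : ∃ k, i ∈ S k
    · obtain ⟨k, hk⟩ := h
      rw [(hSirr k).1.2 i hk j fun hjk => hi (huniq hj hjk ▸ hk), zero_mul]
    · push Not at h
      rw [hd i h, mul_zero]
  have hzinv : ∀ j, z j = ∑ i, P i j * z i := fun j => by
    by_cases h : ∃ l, j ∈ S l
    · obtain ⟨l, hl⟩ := h
      rw [hblock z (fun i hi => hz_not hi) l j hl, hz_mem hl, hπ1 l j hl, Finset.mul_sum]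
      exact Finset.sum_congr rfl fun i hi => by rw [hz_mem hi]; ring
    · push Not at h
      rw [hz_not h]
      refine (Finset.sum_eq_zero fun i _ => ?_).symm
      by_cases hi : ∃ l, i ∈ S l
      · obtain ⟨l, hl⟩ := hi
        rw [(hSirr l).1.2 i hl j (h l), zero_mul]
      · push Not at hi
        rw [hz_not hi, mul_zero]
  have hzsum : ∑ i, z i ^ p = ∑ l, α l ^ p * ∑ i ∈ S l, π l i ^ p := by
    have hpt : ∀ i, z i ^ p = ∑ l, if i ∈ S l then (α l * π l i) ^ p else 0 := fun i => by
      by_cases h : ∃ l, i ∈ S l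
      · obtain ⟨l, hl⟩ := h
        rw [hz_mem hl, Finset.sum_eq_single l (fun k _ hk => if_neg fun h => hk (huniq hl h))
          (by simp), if_pos hl]
      · push Not at h
        rw [hz_not h, Real.zero_rpow hp0]
        exact (Finset.sum_eq_zero fun l _ => if_neg (h l)).symm
    rw [Finset.sum_congr rfl fun i _ => hpt i, Finset.sum_comm]
    refine Finset.sum_congr rfl fun l _ => ?_
    rw [← Finset.sum_filter, Finset.filter_univ_mem, Finset.mul_sum]
    exact Finset.sum_congr rfl fun i hi => Real.mul_rpow (hα0 l) (hπ3 l i hi).le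
  have hw0 : 0 ≤ w := fun i => (hw i).le
  have hgap0 : ∀ c, 0 ≤ xhi c - xlo c := fun c => sub_nonneg.2 ((hlo c).2 _ (hhi c).1)
  have hgap : ∀ c, xhi c - xlo c ≤ z := fun c => by
    have hinv := (hlo c).1.sub_invariant hP hsub (hhi c).1 ((hlo c).2 _ (hhi c).1)
    have hsupp : ∀ i, (∀ l, i ∉ S l) → (xhi c - xlo c) i = 0 := fun i hi => by
      by_contra hne
      obtain ⟨A, hA, hiA⟩ := exists_irredTrapSet_of_invariant_pos hP hsub (hgap0 c) hinv
        (lt_of_le_of_ne (hgap0 c i) (Ne.symm hne))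
      obtain ⟨l, rfl⟩ := hSall A hA
      exact hi l hiA
    intro i
    by_cases h : ∃ l, i ∈ S l
    · obtain ⟨l, hl⟩ := h
      rw [hz_mem hl]
      refine (hSirr l).le_inf'_mul hP (hπ3 l) (hπ1 l)
        (fun j hj => (hinv j).trans (hblock _ hsupp l j hj)) (fun j _ => ?_) i hl
      have h1 := (hhi c).1.le j
      have h2 := (hlo c).1.nonneg hw0 j
      simp only [Pi.sub_apply, Pi.zero_apply] at h2 ⊢
      linarith
    · push Not at h
      rw [hsupp i h, hz_not h]
  have hgap_zero : xhi 0 - xlo 0 = z := by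
    refine le_antisymm (hgap 0) fun i => ?_
    have h1 := (hhi 0).2 z (isEquil_zero_of_invariant hz0 hzw hzinv) i
    have h2 := (hlo 0).2 0 (isEquil_zero_of_invariant le_rfl hw0 (by simp)) i
    simp only [Pi.sub_apply, Pi.zero_apply] at h2 ⊢
    linarith
  refine ⟨?_, fun c => ?_⟩
  · rw [← hzsum]
    refine Finset.sum_congr rfl fun i _ => ?_
    rw [← Pi.sub_apply, hgap_zero, abs_of_nonneg (hz0 i)]
  · rw [← hzsum]
    refine Finset.sum_le_sum fun i _ => ?_
    rw [← Pi.sub_apply, abs_of_nonneg (hgap0 c i)]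
    exact Real.rpow_le_rpow (hgap0 c i) (hgap c i) (by linarith)
end
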